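/- Let n ≥ 13 and let H be as in the Setup (a connected {P,C}-free 3-graph on n vertices containing a copy of P_2 ∪ K_3, with U, W_0, W_1 and H_1 defined from a fixed such copy). If H_1 ≠ ∅, H is not contained in the comet Co(n), and |W_1| = 3, then |H| < 10 + binom(n−6, 2). -/

import Mathlib

/-- A 3-graph: a finite vertex set together with a finite set of edges
(intended to be 3-element subsets of the vertex set). -/
structure ThreeGraph where
  verts : Finset ℕ
  edges : Finset (Finset ℕ)

namespace ThreeGraph

/-- `G` is a genuine 3-uniform hypergraph: every edge is a 3-element subset of the vertex set. -/
def IsValid (G : ThreeGraph) : Prop :=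
  ∀ e ∈ G.edges, e.card = 3 ∧ e ⊆ G.verts

/-- `H.ContainsCopy F` means `F ⊆ H`: there is an injective map of the vertices of `F`
into those of `H` carrying every edge of `F` to an edge of `H`. -/
def ContainsCopy (H F : ThreeGraph) : Prop :=
  ∃ f : ℕ → ℕ, Set.InjOn f ↑F.verts ∧ (∀ v ∈ F.verts, f v ∈ H.verts) ∧
    ∀ e ∈ F.edges, e.image f ∈ H.edges

/-- `H.Free F` : `H` contains no copy of `F`. -/
def Free (H F : ThreeGraph) : Prop := ¬ H.ContainsCopy F

/-- `IsoCopy F H` : `H` is isomorphic to `F`. -/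
def IsoCopy (F H : ThreeGraph) : Prop :=
  ∃ f : ℕ → ℕ, Set.InjOn f ↑F.verts ∧ F.verts.image f = H.verts ∧
    F.edges.image (Finset.image f) = H.edges

/-- Connectivity: any two vertices are joined by a sequence of vertices in which
consecutive ones lie in a common edge. -/
def Connected (G : ThreeGraph) : Prop :=
  ∀ u ∈ G.verts, ∀ v ∈ G.verts,
    Relation.ReflTransGen (fun a b => ∃ e ∈ G.edges, a ∈ e ∧ b ∈ e) u v

/-- Shift all vertices by `k`. -/
def shiftBy (G : ThreeGraph) (k : ℕ) : ThreeGraph :=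
  ⟨G.verts.image (· + k), G.edges.image (Finset.image (· + k))⟩

/-- Vertex-disjoint union of two 3-graphs. -/
def dUnion (G H : ThreeGraph) : ThreeGraph :=
  ⟨G.verts ∪ (H.shiftBy (G.verts.sup id + 1)).verts,
   G.edges ∪ (H.shiftBy (G.verts.sup id + 1)).edges⟩

end ThreeGraph

/-- The loose 3-uniform path of length 3. -/
def pathP : ThreeGraph :=
  ⟨{0,1,2,3,4,5,6}, {{0,1,2},{2,3,4},{4,5,6}}⟩

/-- The triangle `C`. -/
def triangleC : ThreeGraph :=
  ⟨{0,1,2,3,4,5}, {{0,1,2},{2,3,4},{4,5,0}}⟩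

/-- The matching `M`: two disjoint edges. -/
def matchingM : ThreeGraph :=
  ⟨{0,1,2,3,4,5}, {{0,1,2},{3,4,5}}⟩

/-- `P_2`: two edges sharing exactly one vertex. -/
def pairP2 : ThreeGraph :=
  ⟨{0,1,2,3,4}, {{0,1,2},{2,3,4}}⟩

/-- The complete 3-graph `K_n`. -/
def KK (n : ℕ) : ThreeGraph :=
  ⟨Finset.range n, (Finset.range n).powersetCard 3⟩

/-- The full star `S_n` with center `0`. -/
def SS (n : ℕ) : ThreeGraph :=
  ⟨Finset.range n, ((Finset.range n).powersetCard 3).filter (fun e => 0 ∈ e)⟩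

/-- `G_1(n)` with `x,y,z,v = 0,1,2,3`. -/
def G1 (n : ℕ) : ThreeGraph :=
  ⟨Finset.range n,
   insert {0,1,2}
     (((Finset.range n).powersetCard 3).filter
       (fun h => 3 ∈ h ∧ (h ∩ ({0,1,2} : Finset ℕ)).Nonempty))⟩

/-- `G_2(n)` with `x,y,z = 0,1,2`. -/
def G2 (n : ℕ) : ThreeGraph :=
  ⟨Finset.range n,
   insert {0,1,2}
     (((Finset.range n).powersetCard 3).filter
       (fun h => (h ∩ ({0,1,2} : Finset ℕ)).card = 2))⟩

/-- `G_3(n)` with `x,y₁,y₂,z₁,z₂ = 0,1,2,3,4`. -/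
def G3 (n : ℕ) : ThreeGraph :=
  ⟨Finset.range n,
   ((({0,1,2,3,4} : Finset ℕ).powersetCard 3) \ {{1,2,3},{1,2,4}}) ∪
     ((Finset.range n \ ({0,1,2,3,4} : Finset ℕ)).biUnion (fun w => {{0,3,w},{0,4,w}}))⟩

/-- `K_5^{+t}`: `K_5` on `{0,…,4}` with `a,b = 0,1` and `t` pendant edges `{0,1,v}`. -/
def K5plus (t : ℕ) : ThreeGraph :=
  ⟨Finset.range (5 + t),
   ((Finset.range 5).powersetCard 3) ∪ ((Finset.Ico 5 (5 + t)).image (fun v => {0,1,v}))⟩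

/-- The comet `Co(n)`: a `K_4` on `{0,1,2,3}` and a full star on `{0} ∪ {4,…,n-1}`
with center `0`. -/
def comet (n : ℕ) : ThreeGraph :=
  ⟨Finset.range n,
   (({0,1,2,3} : Finset ℕ).powersetCard 3) ∪
     (((insert 0 (Finset.Ico 4 n)).powersetCard 3).filter (fun e => 0 ∈ e))⟩

/-- `W = V(H) \ U`. -/
def Wset (H : ThreeGraph) (U : Finset ℕ) : Finset ℕ := H.verts \ U

/-- `W_0`: the vertices of `W` lying in no edge of `H` entirely contained in `W`. -/
def W0set (H : ThreeGraph) (U : Finset ℕ) : Finset ℕ :=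
  (Wset H U).filter (fun v => ∀ e ∈ H.edges, e ⊆ Wset H U → v ∉ e)

/-- `W_1 = W \ W_0`. -/
def W1set (H : ThreeGraph) (U : Finset ℕ) : Finset ℕ :=
  Wset H U \ W0set H U

/-- `H_1`: the edges of `H` meeting both `U` and `W_1`. -/
def H1set (H : ThreeGraph) (U : Finset ℕ) : Finset (Finset ℕ) :=
  H.edges.filter (fun e => (e ∩ U).Nonempty ∧ (e ∩ W1set H U).Nonempty)

/-- `H[U]`: the edges of `H` entirely contained in `U`. -/
def HUset (H : ThreeGraph) (U : Finset ℕ) : Finset (Finset ℕ) :=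
  H.edges.filter (fun e => e ⊆ U)

/-!
Write the fixed copy of `P_2` as `insert x A`, `insert x B` with `x` its centre. Since `|W₁| = 3`,
the fixed edge `t` of `K_3` is the only edge missing `U = {x} ∪ A ∪ B`. Let `W` be the set of the
remaining `m = n - 8` vertices. Excluding `P` and `C` forces an edge that avoids `x` to contain `A`
or `B`, unless it is `t`, and forces an edge through `x` that meets `t` to lie in `{x} ∪ t`. Hence
at most four edges meet `t`.

For the edges missing `t`, the dominant part is a star with centre `x`, and every edge `A ∪ {w}` or
`B ∪ {w}` confines that star to a smaller vertex set. If some `A ∪ {c}` or `B ∪ {c}` with `c ∈ t` is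
an edge, the star loses one of the two pairs outright; otherwise an edge through `x` meets `t`, and
then edges missing `t` but not `x` survive only if they confine the star, while without any of them
`H` lies in the comet. Either way at most `binom(m, 2) + 2m + 6` edges miss `t`, and
`10 + binom(m, 2) + 2m` is one less than `10 + binom(m + 2, 2)`.
-/

section

open Finset

section

variable {α : Type*} [DecidableEq α]

/-! ### Full stars and books -/

/-- The full star with center `x` over `S`: all triples `{x, y, z}` with `y, z` distinct elements
of `S`. It is meant for `x ∉ S`. -/
def fullStar (x : α) (S : Finset α) : Finset (Finset α) :=
  (S.powersetCard 2).image (insert x)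

lemma mem_fullStar {x : α} {e S : Finset α} (he : #e = 3) (hx : x ∈ e) :
    e ∈ fullStar x S ↔ e ⊆ insert x S := by
  constructor
  · intro h
    obtain ⟨p, hp, rfl⟩ := mem_image.1 h
    exact insert_subset_insert x (mem_powersetCard.1 hp).1
  · intro h
    have hcard : #(e.erase x) = 2 := by rw [card_erase_of_mem hx, he]
    exact mem_image.2
      ⟨e.erase x, mem_powersetCard.2 ⟨subset_insert_iff.1 h, hcard⟩, insert_erase hx⟩

lemma fullStar_mono (x : α) {S T : Finset α} (h : S ⊆ T) : fullStar x S ⊆ fullStar x T :=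
  image_subset_image (powersetCard_mono h)

lemma card_fullStar_le {x : α} {S : Finset α} {k : ℕ} (hS : #S ≤ k) :
    #(fullStar x S) ≤ k.choose 2 :=
  card_image_le.trans <| (card_powersetCard 2 S).trans_le <| Nat.choose_le_choose 2 hS

lemma card_fullStar_insert_le {A : Finset α} (hA : #A = 2) (x w : α) :
    #(fullStar x (insert w A)) ≤ 3 :=
  card_fullStar_le (k := 3) (by grw [card_insert_le, hA])

/-- The book with spine `A` over `S`: all sets `A ∪ {w}` with `w ∈ S`. -/
def book (A S : Finset α) : Finset (Finset α) := S.image (insert · A)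

lemma insert_mem_book {A S : Finset α} {v : α} (hv : v ∈ S) : insert v A ∈ book A S :=
  mem_image_of_mem (insert · A) hv

lemma card_book_le (A S : Finset α) : #(book A S) ≤ #S := card_image_le

/-- The vertices of `T` that form an edge of `E` together with the spine `A`. -/
def pages (E : Finset (Finset α)) (A T : Finset α) : Finset α := {w ∈ T | insert w A ∈ E}

lemma exists_eq_triple_of_mem {e : Finset α} (he : #e = 3) {v : α} (hv : v ∈ e) :
    ∃ a b, a ≠ v ∧ b ≠ v ∧ a ≠ b ∧ e = {v, a, b} := by
  obtain ⟨a, b, hab, hev⟩ := card_eq_two.1 (show #(e.erase v) = 2 by rw [card_erase_of_mem hv, he])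
  have hne (u : α) (hu : u ∈ ({a, b} : Finset α)) : u ≠ v := ne_of_mem_erase (hev ▸ hu)
  exact ⟨a, b, hne a (by simp), hne b (by simp), hab, by rw [← hev, insert_erase hv]⟩

lemma exists_eq_triple_of_mem_of_mem {e : Finset α} (he : #e = 3) {v w : α} (hv : v ∈ e)
    (hw : w ∈ e) (hvw : v ≠ w) : ∃ c, c ≠ v ∧ c ≠ w ∧ e = {v, c, w} := by
  obtain ⟨a, b, hav, hbv, hab, rfl⟩ := exists_eq_triple_of_mem he hv
  rcases (show w = a ∨ w = b by grind) with rfl | rfl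
  exacts [⟨b, hbv, hab.symm, by grind⟩, ⟨a, hav, hab, rfl⟩]

lemma eq_of_mem_of_inter_eq_singleton {s t : Finset α} {a b : α} (h : s ∩ t = {a}) (hs : b ∈ s)
    (ht : b ∈ t) : b = a :=
  mem_singleton.1 (h ▸ mem_inter.2 ⟨hs, ht⟩)

lemma forall_notMem_or_exists_inter_eq_singleton {A e : Finset α} (hA : #A = 2) (h : ¬ A ⊆ e) :
    (∀ v ∈ A, v ∉ e) ∨ ∃ a, A ∩ e = {a} := by
  obtain ⟨y, z, -, rfl⟩ := card_eq_two.1 hA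
  by_cases hy : y ∈ e
  · exact .inr ⟨y, by grind⟩
  by_cases hz : z ∈ e
  · exact .inr ⟨z, by grind⟩
  · exact .inl (by grind)

lemma mem_fullStar_or_mem_fullStar_sdiff {x : α} {e f S : Finset α} (he : #e = 3) (hx : x ∈ e)
    (heS : e ⊆ insert x S) (hxf : x ∉ f) (hfe : ∀ v, f ∩ e ≠ {v}) :
    e ∈ fullStar x f ∨ e ∈ fullStar x (S \ f) := by
  rw [mem_fullStar he hx, mem_fullStar he hx]
  obtain ⟨y, z, -, -, -, rfl⟩ := exists_eq_triple_of_mem he hx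
  have hyz : y ∈ f ↔ z ∈ f := by
    constructor <;> intro h <;> by_contra h'
    exacts [hfe y (by grind), hfe z (by grind)]
  by_cases hy : y ∈ f
  · exact .inl (by grind)
  · exact .inr (by grind)

lemma card_union_erase_le (B : Finset α) {W : Finset α} {w : α} (hw : w ∈ W) :
    #(B ∪ W.erase w) + 1 ≤ #B + #W := by
  grw [card_union_le, add_assoc, card_erase_add_one hw]

lemma choose_add_one_two (m : ℕ) : (m + 1).choose 2 = m + m.choose 2 := by
  rw [Nat.choose_succ_succ', Nat.choose_one_right]

/-! ### Excluding loose paths and loose triangles -/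

/-- No three edges of `E` form a loose path: `P`-freeness, expressed through intersections. For
3-element edges the end edges are automatically different from the middle one. -/
def LoosePathFree (E : Finset (Finset α)) : Prop :=
  ∀ ⦃e₁⦄, e₁ ∈ E → ∀ ⦃e₂⦄, e₂ ∈ E → ∀ ⦃e₃⦄, e₃ ∈ E → ∀ ⦃v w⦄,
    e₁ ∩ e₂ = {v} → e₂ ∩ e₃ = {w} → ¬ Disjoint e₁ e₃

/-- No three edges of `E` form a loose triangle: `C`-freeness, expressed through intersections.
Three edges pairwise meeting in single vertices then have a common vertex, so it is enough to
compare two of these vertices. -/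
def LooseTriangleFree (E : Finset (Finset α)) : Prop :=
  ∀ ⦃e₁⦄, e₁ ∈ E → ∀ ⦃e₂⦄, e₂ ∈ E → ∀ ⦃e₃⦄, e₃ ∈ E → ∀ ⦃u v w⦄,
    e₁ ∩ e₂ = {u} → e₂ ∩ e₃ = {v} → e₃ ∩ e₁ = {w} → u = v

/-- The edges of `E` meeting `t`. -/
def nearEdges (E : Finset (Finset α)) (t : Finset α) : Finset (Finset α) := {e ∈ E | ¬ Disjoint t e}

/-- The edges of `E` missing `t`. -/
def farEdges (E : Finset (Finset α)) (t : Finset α) : Finset (Finset α) := {e ∈ E | Disjoint t e}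

/-- The Setup in the case `|W₁| = 3`: `E` is the edge set of a `{P, C}`-free 3-graph, `insert x A`
and `insert x B` are the two edges of the fixed `P_2` with vertex set `U = {x} ∪ A ∪ B`, `t` is the
fixed edge disjoint from it, and `W` consists of the remaining vertices (the `W_0` of the paper).
That `W_1` is just `t` is encoded by `eq_apart`. -/
structure BowtieConfig (E : Finset (Finset α)) (t W A B : Finset α) (x : α) : Prop where
  card_edge : ∀ e ∈ E, #e = 3
  pathFree : LoosePathFree E
  triangleFree : LooseTriangleFree E
  card_left : #A = 2
  card_right : #B = 2
  left_mem : insert x A ∈ E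
  right_mem : insert x B ∈ E
  apart_mem : t ∈ E
  edge_subset : ∀ e ∈ E, e ⊆ insert x (A ∪ B ∪ t ∪ W)
  center_notMem : x ∉ A ∪ B ∪ t ∪ W
  left_disjoint : Disjoint A (B ∪ t ∪ W)
  right_disjoint : Disjoint B (t ∪ W)
  apart_disjoint : Disjoint t W
  eq_apart : ∀ e ∈ E, Disjoint e (insert x (A ∪ B)) → e = t

namespace BowtieConfig

variable {E : Finset (Finset α)} {t W A B : Finset α} {x : α}

lemma forall_notMem_parts (C : BowtieConfig E t W A B x) :
    (∀ v ∈ A, v ≠ x ∧ v ∉ B ∧ v ∉ t ∧ v ∉ W) ∧ (∀ v ∈ B, v ≠ x ∧ v ∉ t ∧ v ∉ W) ∧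
      (∀ v ∈ t, v ≠ x ∧ v ∉ W) ∧ ∀ v ∈ W, v ≠ x := by
  have := C.center_notMem
  have := disjoint_left.1 C.left_disjoint
  have := disjoint_left.1 C.right_disjoint
  have := disjoint_left.1 C.apart_disjoint
  grind

lemma symm (C : BowtieConfig E t W A B x) : BowtieConfig E t W B A x where
  __ := C
  card_left := C.card_right
  card_right := C.card_left
  left_mem := C.right_mem
  right_mem := C.left_mem
  edge_subset := union_comm A B ▸ C.edge_subset
  center_notMem := union_comm A B ▸ C.center_notMem
  left_disjoint := disjoint_left.2 (by grind [C.forall_notMem_parts])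
  right_disjoint := disjoint_left.2 (by grind [C.forall_notMem_parts])
  eq_apart := union_comm A B ▸ C.eq_apart

lemma left_subset_or_right_subset (C : BowtieConfig E t W A B x) {e : Finset α} (he : e ∈ E)
    (hx : x ∉ e) (hne : e ≠ t) : A ⊆ e ∨ B ⊆ e := by
  have := C.forall_notMem_parts
  by_contra! ⟨hA, hB⟩
  have hAB : insert x A ∩ insert x B = {x} := by grind
  have hBA : insert x B ∩ insert x A = {x} := by rw [inter_comm, hAB]
  have hxA {a : α} (ha : A ∩ e = {a}) : e ∩ insert x A = {a} := by
    rw [inter_comm, insert_inter_of_notMem hx, ha]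
  have hxB {b : α} (hb : B ∩ e = {b}) : insert x B ∩ e = {b} := by
    rw [insert_inter_of_notMem hx, hb]
  rcases forall_notMem_or_exists_inter_eq_singleton C.card_left hA with hA | ⟨a, ha⟩ <;>
    rcases forall_notMem_or_exists_inter_eq_singleton C.card_right hB with hB | ⟨b, hb⟩
  · exact hne (C.eq_apart e he (disjoint_left.2 (by grind)))
  · exact C.pathFree he C.right_mem C.left_mem (inter_comm _ e ▸ hxB hb) hBA
      (disjoint_left.2 (by grind))
  · exact C.pathFree he C.left_mem C.right_mem (hxA ha) hAB (disjoint_left.2 (by grind))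
  · have hax : a = x := C.triangleFree he C.left_mem C.right_mem (hxA ha) hAB (hxB hb)
    have haA : a ∈ A := mem_of_mem_inter_left (ha ▸ mem_singleton_self a)
    exact (C.forall_notMem_parts.1 a haA).1 hax

lemma exists_eq_insert (C : BowtieConfig E t W A B x) {e : Finset α} (he : e ∈ E) (hx : x ∉ e)
    (hne : e ≠ t) : (∃ v, insert v A = e) ∨ ∃ v, insert v B = e := by
  refine (C.left_subset_or_right_subset he hx hne).imp (fun h => ?_) (fun h => ?_)
  · obtain ⟨v, -, hv⟩ := exists_eq_insert_iff.2 ⟨h, by rw [C.card_edge e he, C.card_left]⟩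
    exact ⟨v, hv⟩
  · obtain ⟨v, -, hv⟩ := exists_eq_insert_iff.2 ⟨h, by rw [C.card_edge e he, C.card_right]⟩
    exact ⟨v, hv⟩

lemma subset_insert_apart_of_not_disjoint (C : BowtieConfig E t W A B x) {e : Finset α}
    (he : e ∈ E) (hx : x ∈ e) (het : ¬ Disjoint t e) : e ⊆ insert x t := by
  have := C.forall_notMem_parts
  obtain ⟨w, hwt, hwe⟩ := not_disjoint_iff.1 het
  obtain ⟨v, -, -, rfl⟩ := exists_eq_triple_of_mem_of_mem (C.card_edge e he) hx hwe
    (C.forall_notMem_parts.2.2.1 w hwt).1.symm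
  by_contra hsub
  have hte : t ∩ {x, v, w} = {w} := by grind
  by_cases hvA : v ∈ A
  · exact C.pathFree C.apart_mem he C.right_mem hte (show _ ∩ insert x B = {x} by grind)
      (disjoint_left.2 (by grind))
  · exact C.pathFree C.apart_mem he C.left_mem hte (show _ ∩ insert x A = {x} by grind)
      (disjoint_left.2 (by grind))

/-! ### Edges meeting `t` -/

lemma eq_apart_or_of_mem_nearEdges (C : BowtieConfig E t W A B x) {e : Finset α}
    (he : e ∈ nearEdges E t) :
    e = t ∨ x ∈ e ∧ e ⊆ insert x t ∨ e ∈ book A (pages E A t) ∨ e ∈ book B (pages E B t) := by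
  have := C.forall_notMem_parts
  obtain ⟨heE, het⟩ := mem_filter.1 he
  obtain ⟨w, hwt, hwe⟩ := not_disjoint_iff.1 het
  by_cases hxe : x ∈ e
  · exact .inr <| .inl ⟨hxe, C.subset_insert_apart_of_not_disjoint heE hxe het⟩
  by_cases hne : e = t
  · exact .inl hne
  rcases C.exists_eq_insert heE hxe hne with ⟨v, rfl⟩ | ⟨v, rfl⟩
  · obtain rfl : w = v := by grind
    exact .inr <| .inr <| .inl <| insert_mem_book <| mem_filter.2 ⟨hwt, heE⟩
  · obtain rfl : w = v := by grind
    exact .inr <| .inr <| .inr <| insert_mem_book <| mem_filter.2 ⟨hwt, heE⟩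

lemma eq_of_mem_pages_apart (C : BowtieConfig E t W A B x) {v w : α} (hv : v ∈ pages E A t)
    (hw : w ∈ pages E B t) : v = w := by
  have := C.forall_notMem_parts
  obtain ⟨hvt, hvA⟩ := mem_filter.1 hv
  obtain ⟨hwt, hwB⟩ := mem_filter.1 hw
  by_contra hvw
  exact C.pathFree hvA C.apart_mem hwB (show insert v A ∩ t = {v} by grind)
    (show t ∩ insert w B = {w} by grind) (disjoint_left.2 (by grind))

lemma notMem_of_mem_pages_apart (C : BowtieConfig E t W A B x) {w : α} (hw : w ∈ pages E A t)
    {e : Finset α} (he : e ∈ E) (hx : x ∈ e) (het : e ⊆ insert x t) : w ∉ e := by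
  have := C.forall_notMem_parts
  obtain ⟨hwt, hwA⟩ := mem_filter.1 hw
  intro hwe
  exact C.pathFree hwA he C.right_mem (show insert w A ∩ e = {w} by grind)
    (show e ∩ insert x B = {x} by grind) (disjoint_left.2 (by grind))

lemma nearEdges_subset (C : BowtieConfig E t W A B x) :
    nearEdges E t ⊆ insert t (fullStar x (t \ (pages E A t ∪ pages E B t)) ∪
      (book A (pages E A t) ∪ book B (pages E B t))) := by
  intro e he
  simp only [mem_insert, mem_union]
  rcases C.eq_apart_or_of_mem_nearEdges he with h | ⟨hx, h⟩ | h
  · exact .inl h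
  · have heE := mem_of_mem_filter e he
    refine .inr <| .inl <| (mem_fullStar (C.card_edge e heE) hx).2 fun v hv => ?_
    have hA (hw : v ∈ pages E A t) := C.notMem_of_mem_pages_apart hw heE hx h hv
    have hB (hw : v ∈ pages E B t) := C.symm.notMem_of_mem_pages_apart hw heE hx h hv
    grind
  · exact .inr (.inr h)

lemma card_nearEdges_le (C : BowtieConfig E t W A B x) : #(nearEdges E t) ≤ 4 := by
  have ht := C.card_edge t C.apart_mem
  have hAt : pages E A t ⊆ t := filter_subset _ _
  have hBt : pages E B t ⊆ t := filter_subset _ _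
  have hnear : #(nearEdges E t) ≤
      (3 - #(pages E A t ∪ pages E B t)).choose 2 + (#(pages E A t) + #(pages E B t)) + 1 := by
    have hstar : #(t \ (pages E A t ∪ pages E B t)) ≤ 3 - #(pages E A t ∪ pages E B t) := by
      rw [card_sdiff_of_subset (union_subset hAt hBt), ht]
    grw [C.nearEdges_subset, card_insert_le, card_union_le, card_union_le,
      card_fullStar_le hstar, card_book_le, card_book_le]
  have star_add_book_le : ∀ k ≤ 3, (3 - k).choose 2 + k ≤ 3 := by decide
  rcases (pages E A t).eq_empty_or_nonempty with hA | ⟨v, hv⟩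
  · rw [hA, empty_union, card_empty] at hnear
    linarith [star_add_book_le _ ((card_le_card hBt).trans_eq ht)]
  rcases (pages E B t).eq_empty_or_nonempty with hB | ⟨w, hw⟩
  · rw [hB, union_empty, card_empty] at hnear
    linarith [star_add_book_le _ ((card_le_card hAt).trans_eq ht)]
  · have hAw : pages E A t = {w} := eq_singleton_iff_unique_mem.2
      ⟨C.eq_of_mem_pages_apart hv hw ▸ hv, fun a ha => C.eq_of_mem_pages_apart ha hw⟩
    have hBw : pages E B t = {w} := eq_singleton_iff_unique_mem.2
      ⟨hw, fun b hb => (C.eq_of_mem_pages_apart hv hb).symm.trans (C.eq_of_mem_pages_apart hv hw)⟩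
    simpa [hAw, hBw] using hnear

/-! ### Edges missing `t` -/

lemma eq_center_or_mem_of_mem_farEdges (C : BowtieConfig E t W A B x) {e : Finset α}
    (he : e ∈ farEdges E t) {v : α} (hv : v ∈ e) : v = x ∨ v ∈ A ∨ v ∈ B ∨ v ∈ W := by
  obtain ⟨heE, het⟩ := mem_filter.1 he
  simpa [disjoint_right.1 het hv, or_assoc] using C.edge_subset e heE hv

lemma mem_book_or_mem_book_of_mem_farEdges (C : BowtieConfig E t W A B x) {e : Finset α}
    (he : e ∈ farEdges E t) (hx : x ∉ e) :
    e ∈ book A (B ∪ pages E A W) ∨ e ∈ book B (A ∪ pages E B W) := by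
  obtain ⟨heE, het⟩ := mem_filter.1 he
  have hne : e ≠ t := by
    rintro rfl
    simpa [disjoint_self.1 het] using C.card_edge e heE
  refine (C.exists_eq_insert heE hx hne).imp ?_ ?_ <;> rintro ⟨v, rfl⟩
  · have := C.eq_center_or_mem_of_mem_farEdges he (mem_insert_self v A)
    by_cases hv : v ∈ A
    · simpa [hv, C.card_left] using C.card_edge _ heE
    · exact insert_mem_book (by grind [pages])
  · have := C.eq_center_or_mem_of_mem_farEdges he (mem_insert_self v B)
    by_cases hv : v ∈ B
    · simpa [hv, C.card_right] using C.card_edge _ heE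
    · exact insert_mem_book (by grind [pages])

lemma forall_notMem_left_of_mem_pages_apart (C : BowtieConfig E t W A B x) {c : α}
    (hc : c ∈ pages E A t) {e : Finset α} (he : e ∈ farEdges E t) (hA : ¬ A ⊆ e) :
    ∀ v ∈ A, v ∉ e := by
  have := C.forall_notMem_parts
  obtain ⟨hct, hcA⟩ := mem_filter.1 hc
  obtain ⟨heE, het⟩ := mem_filter.1 he
  have hce : c ∉ e := disjoint_left.1 het hct
  refine (forall_notMem_or_exists_inter_eq_singleton C.card_left hA).resolve_right ?_
  rintro ⟨a, ha⟩
  exact C.pathFree C.apart_mem hcA heE (show t ∩ insert c A = {c} by grind)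
    ((insert_inter_of_notMem hce).trans ha) het

lemma notMem_left_of_insert_right_mem_farEdges (C : BowtieConfig E t W A B x) {c v : α}
    (hc : c ∈ pages E A t) (hv : insert v B ∈ farEdges E t) : v ∉ A := by
  have := C.forall_notMem_parts
  intro hvA
  refine C.forall_notMem_left_of_mem_pages_apart hc hv (fun h => ?_) v hvA (mem_insert_self v B)
  have hA : A ⊆ {v} := by grind
  simpa [C.card_left] using card_le_card hA

lemma farEdges_subset_of_mem_pages_apart (C : BowtieConfig E t W A B x) {c : α}
    (hc : c ∈ pages E A t) :
    farEdges E t ⊆ insert (insert x A) ({e ∈ E | x ∈ e ∧ e ⊆ insert x (B ∪ W)} ∪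
      (book A (B ∪ pages E A W) ∪ book B (pages E B W))) := by
  intro e he
  have heE := mem_of_mem_filter e he
  simp only [mem_insert, mem_union, mem_filter]
  by_cases hx : x ∈ e
  · by_cases hA : A ⊆ e
    · have hxA : x ∉ A := fun h => (C.forall_notMem_parts.1 x h).1 rfl
      have hcard : #e ≤ #(insert x A) := by
        rw [C.card_edge e heE, card_insert_of_notMem hxA, C.card_left]
      exact .inl (eq_of_subset_of_card_le (insert_subset hx hA) hcard).symm
    · refine .inr <| .inl ⟨heE, hx, fun v hv => ?_⟩
      have := C.forall_notMem_left_of_mem_pages_apart hc he hA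
      have := C.eq_center_or_mem_of_mem_farEdges he hv
      grind
  · rcases C.mem_book_or_mem_book_of_mem_farEdges he hx with h | h
    · exact .inr <| .inr <| .inl h
    · obtain ⟨v, hv, rfl⟩ := mem_image.1 h
      have hvA := C.notMem_left_of_insert_right_mem_farEdges hc he
      exact .inr <| .inr <| .inr <| insert_mem_book ((mem_union.1 hv).resolve_left hvA)

lemma center_subset (C : BowtieConfig E t W A B x) :
    {e ∈ E | x ∈ e ∧ e ⊆ insert x (B ∪ W)} ⊆ fullStar x (B ∪ W) := fun e he => by
  obtain ⟨heE, hx, heS⟩ := mem_filter.1 he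
  exact (mem_fullStar (C.card_edge e heE) hx).2 heS

lemma center_subset_of_mem_pages_right (C : BowtieConfig E t W A B x) {w : α}
    (hw : w ∈ pages E B W) :
    {e ∈ E | x ∈ e ∧ e ⊆ insert x (B ∪ W)} ⊆ fullStar x (insert w B) ∪ fullStar x W := by
  have := C.forall_notMem_parts
  obtain ⟨hwW, hwB⟩ := mem_filter.1 hw
  intro e he
  obtain ⟨heE, hx, heS⟩ := mem_filter.1 he
  have hinter (v : α) : insert w B ∩ e ≠ {v} := fun hv =>
    C.pathFree hwB heE C.left_mem hv (show e ∩ insert x A = {x} by grind)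
      (disjoint_left.2 (by grind))
  refine mem_union.2 <| (mem_fullStar_or_mem_fullStar_sdiff (C.card_edge e heE) hx heS
    (by grind) hinter).imp_right fun h => ?_
  exact fullStar_mono x (by grind) h

lemma center_subset_of_mem_pages_left (C : BowtieConfig E t W A B x) {w : α}
    (hw : w ∈ pages E A W) :
    {e ∈ E | x ∈ e ∧ e ⊆ insert x (B ∪ W)} ⊆
      fullStar x (B ∪ W.erase w) ∪ book {x, w} B := by
  have := C.forall_notMem_parts
  obtain ⟨hwW, hwA⟩ := mem_filter.1 hw
  intro e he
  obtain ⟨heE, hx, heS⟩ := mem_filter.1 he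
  by_cases hwe : w ∈ e
  · obtain ⟨v, -, -, rfl⟩ := exists_eq_triple_of_mem_of_mem (C.card_edge e heE) hx hwe (by grind)
    have hvB : v ∈ B := by
      by_contra
      exact C.pathFree hwA heE C.right_mem (show insert w A ∩ _ = {w} by grind)
        (show _ ∩ insert x B = {x} by grind) (disjoint_left.2 (by grind))
    rw [insert_comm x v]
    exact mem_union_right _ (insert_mem_book hvB)
  · exact mem_union_left _ <| (mem_fullStar (C.card_edge e heE) hx).2 (by grind)

lemma card_farEdges_le_of_mem_pages_apart (C : BowtieConfig E t W A B x) {c : α}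
    (hc : c ∈ pages E A t) : #(farEdges E t) ≤ (#W).choose 2 + 2 * #W + 6 := by
  have hfar := card_le_card (C.farEdges_subset_of_mem_pages_apart hc)
  grw [card_insert_le, card_union_le, card_union_le, card_book_le, card_book_le, card_union_le,
    C.card_right] at hfar
  have hAW : #(pages E A W) ≤ #W := card_filter_le _ _
  have hBW : #(pages E B W) ≤ #W := card_filter_le _ _
  rcases (pages E B W).eq_empty_or_nonempty with hB | ⟨w, hw⟩
  · rw [hB, card_empty] at hfar
    rcases (pages E A W).eq_empty_or_nonempty with hA | ⟨w, hw⟩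
    · have hcard : #(B ∪ W) ≤ #W + 2 := by grw [card_union_le, C.card_right, add_comm]
      have hcenter := card_le_card C.center_subset
      grw [card_fullStar_le hcard] at hcenter
      rw [hA, card_empty] at hfar
      linarith [choose_add_one_two #W, choose_add_one_two (#W + 1)]
    · have hcard : #(B ∪ W.erase w) ≤ #W + 1 := by
        linarith [card_union_erase_le B (mem_filter.1 hw).1, C.card_right]
      have hcenter := card_le_card (C.center_subset_of_mem_pages_left hw)
      grw [card_union_le, card_fullStar_le hcard, card_book_le, C.card_right] at hcenter
      linarith [choose_add_one_two #W]
  · have hcenter := card_le_card (C.center_subset_of_mem_pages_right hw)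
    grw [card_union_le, card_fullStar_insert_le C.card_right, card_fullStar_le le_rfl] at hcenter
    linarith

lemma inter_ne_singleton_of_mem_farEdges (C : BowtieConfig E t W A B x)
    (hg : ∃ g ∈ E, x ∈ g ∧ g ⊆ insert x t) {f e : Finset α} (hf : f ∈ farEdges E t) (hxf : x ∉ f)
    (he : e ∈ farEdges E t) (hxe : x ∈ e) (v : α) : f ∩ e ≠ {v} := by
  obtain ⟨g, hgE, hxg, hgt⟩ := hg
  obtain ⟨hfE, hft⟩ := mem_filter.1 hf
  obtain ⟨heE, het⟩ := mem_filter.1 he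
  have := disjoint_left.1 hft
  have := disjoint_left.1 het
  exact fun hv => C.pathFree hfE heE hgE hv (show e ∩ g = {x} by grind)
    (disjoint_left.2 (by grind))

lemma left_mem_farEdges (C : BowtieConfig E t W A B x) : insert x A ∈ farEdges E t :=
  mem_filter.2 ⟨C.left_mem, disjoint_left.2 (by grind [C.forall_notMem_parts])⟩

lemma mem_book_pages_or_mem_book_pages (C : BowtieConfig E t W A B x)
    (hg : ∃ g ∈ E, x ∈ g ∧ g ⊆ insert x t) {f : Finset α} (hf : f ∈ farEdges E t) (hxf : x ∉ f) :
    f ∈ book A (pages E A W) ∨ f ∈ book B (pages E B W) := by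
  have := C.forall_notMem_parts
  have hinter {e : Finset α} (he : e ∈ farEdges E t) (hxe : x ∈ e) (v : α) : f ∩ e ≠ {v} :=
    C.inter_ne_singleton_of_mem_farEdges hg hf hxf he hxe v
  refine (C.mem_book_or_mem_book_of_mem_farEdges hf hxf).imp (fun h => ?_) (fun h => ?_)
  · obtain ⟨v, hv, rfl⟩ := mem_image.1 h
    have hvB : v ∉ B := fun hvB =>
      hinter C.symm.left_mem_farEdges (mem_insert_self x B) v (by grind)
    exact insert_mem_book <| (mem_union.1 hv).resolve_left hvB
  · obtain ⟨v, hv, rfl⟩ := mem_image.1 h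
    have hvA : v ∉ A := fun hvA =>
      hinter C.left_mem_farEdges (mem_insert_self x A) v (by grind)
    exact insert_mem_book <| (mem_union.1 hv).resolve_left hvA

lemma mem_fullStar_or_mem_fullStar_of_mem_pages (C : BowtieConfig E t W A B x)
    (hg : ∃ g ∈ E, x ∈ g ∧ g ⊆ insert x t) {w : α} (hw : w ∈ pages E A W) {e : Finset α}
    (he : e ∈ farEdges E t) (hxe : x ∈ e) :
    e ∈ fullStar x (insert w A) ∨ e ∈ fullStar x (B ∪ W.erase w) := by
  have := C.forall_notMem_parts
  obtain ⟨hwW, hwA⟩ := mem_filter.1 hw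
  have hsub : e ⊆ insert x (A ∪ B ∪ W) := fun v hv => by
    grind [C.eq_center_or_mem_of_mem_farEdges he hv]
  have hxw : x ∉ insert w A := by grind
  have hfar : insert w A ∈ farEdges E t := mem_filter.2 ⟨hwA, disjoint_left.2 (by grind)⟩
  refine (mem_fullStar_or_mem_fullStar_sdiff (C.card_edge e (mem_of_mem_filter e he)) hxe hsub hxw
    (C.inter_ne_singleton_of_mem_farEdges hg hfar hxw he hxe)).imp_right fun h => ?_
  exact fullStar_mono x (by grind) h

lemma mem_fullStar_of_mem_pages_of_mem_pages (C : BowtieConfig E t W A B x)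
    (hg : ∃ g ∈ E, x ∈ g ∧ g ⊆ insert x t) {v w : α} (hv : v ∈ pages E A W)
    (hw : w ∈ pages E B W) {e : Finset α} (he : e ∈ farEdges E t) (hxe : x ∈ e) :
    e ∈ fullStar x (insert v A) ∨ e ∈ fullStar x (insert w B) ∨ e ∈ fullStar x W := by
  have := C.forall_notMem_parts
  refine (C.mem_fullStar_or_mem_fullStar_of_mem_pages hg hv he hxe).imp_right fun hB => ?_
  refine (C.symm.mem_fullStar_or_mem_fullStar_of_mem_pages hg hw he hxe).imp_right fun hA => ?_
  have hcard := C.card_edge e (mem_of_mem_filter e he)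
  rw [mem_fullStar hcard hxe] at hA hB ⊢
  grind

lemma card_center_farEdges_le (C : BowtieConfig E t W A B x)
    (hg : ∃ g ∈ E, x ∈ g ∧ g ⊆ insert x t) {v : α} (hv : v ∈ pages E A W) :
    #{e ∈ farEdges E t | x ∈ e} + (#(pages E A W) + #(pages E B W)) ≤
      (#W).choose 2 + 2 * #W + 6 := by
  have hAW : #(pages E A W) ≤ #W := card_filter_le _ _
  have hBW : #(pages E B W) ≤ #W := card_filter_le _ _
  rcases (pages E B W).eq_empty_or_nonempty with hB | ⟨w, hw⟩
  · have hcard : #(B ∪ W.erase v) ≤ #W + 1 := by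
      linarith [card_union_erase_le B (mem_filter.1 hv).1, C.card_right]
    have hsub : {e ∈ farEdges E t | x ∈ e} ⊆
        fullStar x (insert v A) ∪ fullStar x (B ∪ W.erase v) := fun e he => by
      obtain ⟨het, hxe⟩ := mem_filter.1 he
      exact mem_union.2 (C.mem_fullStar_or_mem_fullStar_of_mem_pages hg hv het hxe)
    grw [hsub, card_union_le, card_fullStar_insert_le C.card_left, card_fullStar_le hcard, hB,
      card_empty, hAW]
    linarith [choose_add_one_two #W]
  · have hsub : {e ∈ farEdges E t | x ∈ e} ⊆
        fullStar x (insert v A) ∪ (fullStar x (insert w B) ∪ fullStar x W) := fun e he => by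
      obtain ⟨het, hxe⟩ := mem_filter.1 he
      simpa only [mem_union] using C.mem_fullStar_of_mem_pages_of_mem_pages hg hv hw het hxe
    grw [hsub, card_union_le, card_union_le, card_fullStar_insert_le C.card_left,
      card_fullStar_insert_le C.card_right, card_fullStar_le le_rfl, hAW, hBW]
    linarith

lemma card_farEdges_le_of_mem_pages (C : BowtieConfig E t W A B x)
    (hg : ∃ g ∈ E, x ∈ g ∧ g ⊆ insert x t) {w : α} (hw : w ∈ pages E A W) :
    #(farEdges E t) ≤ (#W).choose 2 + 2 * #W + 6 := by
  have hsub : farEdges E t ⊆ {e ∈ farEdges E t | x ∈ e} ∪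
      (book A (pages E A W) ∪ book B (pages E B W)) := fun e he => by
    by_cases hxe : x ∈ e
    · exact mem_union_left _ (mem_filter.2 ⟨he, hxe⟩)
    · exact mem_union_right _ (mem_union.2 (C.mem_book_pages_or_mem_book_pages hg he hxe))
  have hfar := card_le_card hsub
  grw [card_union_le, card_union_le, card_book_le, card_book_le] at hfar
  exact hfar.trans (C.card_center_farEdges_le hg hw)

/-! ### The edge bound -/

lemma card_farEdges_le (C : BowtieConfig E t W A B x) (hnear : ∃ e ∈ nearEdges E t, e ≠ t)
    (hcomet : ¬ ∀ e ∈ E, e ⊆ insert x t ∨ x ∈ e ∧ Disjoint t e) :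
    #(farEdges E t) ≤ (#W).choose 2 + 2 * #W + 6 := by
  rcases (pages E A t).eq_empty_or_nonempty with hAt | ⟨c, hc⟩
  swap
  · exact C.card_farEdges_le_of_mem_pages_apart hc
  rcases (pages E B t).eq_empty_or_nonempty with hBt | ⟨c, hc⟩
  swap
  · exact C.symm.card_farEdges_le_of_mem_pages_apart hc
  have hstar {e : Finset α} (he : e ∈ nearEdges E t) : e = t ∨ x ∈ e ∧ e ⊆ insert x t := by
    simpa [hAt, hBt, book] using C.eq_apart_or_of_mem_nearEdges he
  obtain ⟨g, hg, hgt⟩ := hnear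
  have hg : ∃ g ∈ E, x ∈ g ∧ g ⊆ insert x t :=
    ⟨g, mem_of_mem_filter g hg, (hstar hg).resolve_left hgt⟩
  push Not at hcomet
  obtain ⟨f, hfE, hfsub, hxf⟩ := hcomet
  have hft : Disjoint t f := by
    by_contra hft
    rcases hstar (mem_filter.2 ⟨hfE, hft⟩) with rfl | h
    exacts [hfsub (subset_insert x f), hfsub h.2]
  rcases C.mem_book_pages_or_mem_book_pages hg (mem_filter.2 ⟨hfE, hft⟩) (fun h => hxf h hft)
    with h | h <;> obtain ⟨w, hw, -⟩ := mem_image.1 h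
  · exact C.card_farEdges_le_of_mem_pages hg hw
  · exact C.symm.card_farEdges_le_of_mem_pages hg hw

lemma card_edges_lt (C : BowtieConfig E t W A B x) (hnear : ∃ e ∈ nearEdges E t, e ≠ t)
    (hcomet : ¬ ∀ e ∈ E, e ⊆ insert x t ∨ x ∈ e ∧ Disjoint t e) :
    #E < 10 + (#W + 2).choose 2 := by
  have hsplit : #(farEdges E t) + #(nearEdges E t) = #E := card_filter_add_card_filter_not _
  linarith [C.card_nearEdges_le, C.card_farEdges_le hnear hcomet, choose_add_one_two #W,
    choose_add_one_two (#W + 1)]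

end BowtieConfig

end

/-! ### Translation to `ThreeGraph` -/

lemma exists_injOn_lt_card {α : Type*} {V t : Finset α} {x : α} (ht : t ⊆ V) (hx : x ∈ V)
    (hxt : x ∉ t) :
    ∃ f : α → ℕ, Set.InjOn f V ∧ (∀ v ∈ V, f v < #V) ∧ f x = 0 ∧ (∀ v ∈ t, f v ≤ #t) ∧
      ∀ v, v ≠ x → v ∉ t → #t < f v := by
  classical
  set R := V \ insert x t with hR
  set l := x :: (t.toList ++ R.toList) with hl
  have hmem {v : α} : v ∈ l ↔ v ∈ V := by
    have := @ht v
    simp only [hl, hR, List.mem_cons, List.mem_append, mem_toList, mem_sdiff, mem_insert]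
    grind
  have hlength : l.length = #V := by
    have := card_sdiff_add_card_eq_card (insert_subset hx ht)
    rw [card_insert_of_notMem hxt] at this
    simp only [hl, hR, List.length_cons, List.length_append, length_toList]
    omega
  refine ⟨l.idxOf, fun v hv w _ hvw => (List.idxOf_inj (hmem.2 hv)).1 hvw, fun v hv =>
    hlength ▸ List.idxOf_lt_length_of_mem (hmem.2 hv), List.idxOf_cons_self, fun v hv => ?_,
    fun v hvx hvt => ?_⟩
  · have hvx : x ≠ v := by
      rintro rfl
      exact hxt hv
    change l.idxOf v ≤ #t
    rw [List.idxOf_cons_ne _ hvx, List.idxOf_append_of_mem (mem_toList.2 hv), ← length_toList]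
    exact List.idxOf_lt_length_of_mem (mem_toList.2 hv)
  · change #t < l.idxOf v
    rw [List.idxOf_cons_ne _ hvx.symm, List.idxOf_append_of_notMem (by simpa using hvt),
      length_toList]
    omega

namespace ThreeGraph

variable {H F : ThreeGraph}

lemma IsValid.containsCopy_of_nodup (hval : H.IsValid) {l : List ℕ} (hl : l.Nodup)
    (hF : ∀ i ∈ F.verts, i < l.length) (hcover : ∀ i ∈ F.verts, ∃ e ∈ F.edges, i ∈ e)
    (hedge : ∀ e ∈ F.edges, e.image (l.getD · 0) ∈ H.edges) : H.ContainsCopy F := by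
  refine ⟨(l.getD · 0), fun i hi j hj hij => ?_, fun i hi => ?_, hedge⟩
  · simpa [hF i hi, hF j hj, hl.getElem_inj_iff] using hij
  · obtain ⟨e, he, hie⟩ := hcover i hi
    exact (hval _ (hedge e he)).2 (mem_image_of_mem _ hie)

lemma IsValid.loosePathFree (hval : H.IsValid) (hP : H.Free pathP) : LoosePathFree H.edges := by
  intro e₁ he₁ e₂ he₂ e₃ he₃ v w h₁₂ h₂₃ h₁₃
  have hv : v ∈ e₁ ∩ e₂ := by simp [h₁₂]
  have hw : w ∈ e₂ ∩ e₃ := by simp [h₂₃]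
  rw [mem_inter] at hv hw
  have hvw : v ≠ w := disjoint_iff_ne.1 h₁₃ v hv.1 w hw.2
  obtain ⟨b, a, hbv, hav, hba, rfl⟩ := exists_eq_triple_of_mem (hval e₁ he₁).1 hv.1
  obtain ⟨c, hcv, hcw, rfl⟩ := exists_eq_triple_of_mem_of_mem (hval e₂ he₂).1 hv.2 hw.1 hvw
  obtain ⟨d, f, hdw, hfw, hdf, rfl⟩ := exists_eq_triple_of_mem (hval e₃ he₃).1 hw.2
  have hnodup : [a, b, v, c, w, d, f].Nodup := by
    have h₁₂ := fun z => eq_of_mem_of_inter_eq_singleton (b := z) h₁₂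
    have h₂₃ := fun z => eq_of_mem_of_inter_eq_singleton (b := z) h₂₃
    have h₁₃ := disjoint_left.1 h₁₃
    simp only [mem_insert, mem_singleton, forall_eq_or_imp, forall_eq] at h₁₂ h₂₃ h₁₃
    simp only [List.nodup_cons, List.mem_cons]
    grind
  refine hP (hval.containsCopy_of_nodup hnodup (by simp [pathP]) (by decide) ?_)
  have habv : ({a, b, v} : Finset ℕ) = {v, b, a} := by grind
  simpa [pathP, habv] using ⟨he₁, he₂, he₃⟩

lemma IsValid.looseTriangleFree (hval : H.IsValid) (hC : H.Free triangleC) :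
    LooseTriangleFree H.edges := by
  intro e₁ he₁ e₂ he₂ e₃ he₃ u v w h₁₂ h₂₃ h₃₁
  by_contra huv
  have hu : u ∈ e₁ ∩ e₂ := by simp [h₁₂]
  have hv : v ∈ e₂ ∩ e₃ := by simp [h₂₃]
  have hw : w ∈ e₃ ∩ e₁ := by simp [h₃₁]
  rw [mem_inter] at hu hv hw
  have hwu : w ≠ u := by
    rintro rfl
    exact huv (eq_of_mem_of_inter_eq_singleton h₂₃ hu.2 hw.1)
  have hvw : v ≠ w := by
    rintro rfl
    exact huv (eq_of_mem_of_inter_eq_singleton h₁₂ hw.2 hv.1).symm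
  obtain ⟨a, haw, hau, rfl⟩ := exists_eq_triple_of_mem_of_mem (hval e₁ he₁).1 hw.2 hu.1 hwu
  obtain ⟨b, hbu, hbv, rfl⟩ := exists_eq_triple_of_mem_of_mem (hval e₂ he₂).1 hu.2 hv.1 huv
  obtain ⟨c, hcv, hcw, rfl⟩ := exists_eq_triple_of_mem_of_mem (hval e₃ he₃).1 hv.2 hw.1 hvw
  have hnodup : [w, a, u, b, v, c].Nodup := by
    have h₁₂ := fun z => eq_of_mem_of_inter_eq_singleton (b := z) h₁₂
    have h₂₃ := fun z => eq_of_mem_of_inter_eq_singleton (b := z) h₂₃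
    have h₃₁ := fun z => eq_of_mem_of_inter_eq_singleton (b := z) h₃₁
    simp only [mem_insert, mem_singleton, forall_eq_or_imp, forall_eq] at h₁₂ h₂₃ h₃₁
    simp only [List.nodup_cons, List.mem_cons]
    grind
  refine hC (hval.containsCopy_of_nodup hnodup (by simp [triangleC]) (by decide) ?_)
  simpa [triangleC] using ⟨he₁, he₂, he₃⟩

lemma IsValid.comet_containsCopy (hval : H.IsValid) {t : Finset ℕ} {x : ℕ} (ht : t ⊆ H.verts)
    (ht3 : #t = 3) (hx : x ∈ H.verts) (hxt : x ∉ t)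
    (h : ∀ e ∈ H.edges, e ⊆ insert x t ∨ x ∈ e ∧ Disjoint t e) :
    (comet #H.verts).ContainsCopy H := by
  obtain ⟨f, hinj, hlt, hfx, hft, hfR⟩ := exists_injOn_lt_card ht hx hxt
  rw [ht3] at hft hfR
  refine ⟨f, hinj, fun v hv => mem_range.2 (hlt v hv), fun e he => ?_⟩
  obtain ⟨he3, heV⟩ := hval e he
  have hcard : #(e.image f) = 3 := by rw [card_image_of_injOn (hinj.mono heV), he3]
  simp only [comet, mem_union, mem_filter, mem_powersetCard]
  rcases h e he with hsub | ⟨hxe, hte⟩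
  · refine .inl ⟨image_subset_iff.2 fun v hv => ?_, hcard⟩
    have hv3 : f v ≤ 3 := by
      rcases mem_insert.1 (hsub hv) with rfl | hvt
      exacts [hfx.trans_le (Nat.zero_le 3), hft v hvt]
    simp only [mem_insert, mem_singleton]
    omega
  · refine .inr ⟨⟨image_subset_iff.2 fun v hv => ?_, hcard⟩, mem_image.2 ⟨x, hxe, hfx⟩⟩
    by_cases hvx : v = x
    · exact mem_insert.2 (.inl (hvx ▸ hfx))
    · exact mem_insert_of_mem <| mem_Ico.2
        ⟨hfR v hvx (disjoint_right.1 hte hv), hlt v (heV hv)⟩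

lemma IsValid.eq_W1set_of_disjoint (hval : H.IsValid) {U e : Finset ℕ}
    (hW1 : #(W1set H U) = 3) (he : e ∈ H.edges) (heU : Disjoint e U) : e = W1set H U := by
  have heW : e ⊆ Wset H U := subset_sdiff.2 ⟨(hval e he).2, heU⟩
  refine eq_of_subset_of_card_le (fun v hv => ?_) (by rw [hW1, (hval e he).1])
  simp only [W1set, W0set, mem_sdiff, mem_filter, not_and, not_forall, not_not]
  exact ⟨heW hv, fun _ => ⟨e, he, heW, hv⟩⟩

lemma exists_mem_nearEdges_of_H1set_nonempty {U : Finset ℕ} (hH1 : (H1set H U).Nonempty) :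
    ∃ e ∈ nearEdges H.edges (W1set H U), e ≠ W1set H U := by
  obtain ⟨e, he⟩ := hH1
  obtain ⟨heE, ⟨u, hu⟩, heW⟩ := mem_filter.1 he
  obtain ⟨hue, huU⟩ := mem_inter.1 hu
  refine ⟨e, mem_filter.2 ⟨heE, ?_⟩, ?_⟩
  · rwa [disjoint_iff_inter_eq_empty, inter_comm, ← ne_eq, ← nonempty_iff_ne_empty]
  · rintro rfl
    exact (mem_sdiff.1 (mem_sdiff.1 hue).1).2 huU

lemma IsValid.bowtieConfig (hval : H.IsValid) (hP : H.Free pathP) (hC : H.Free triangleC)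
    {u0 u1 u2 u3 u4 : ℕ} {t : Finset ℕ} (hdist : [u0, u1, u2, u3, u4].Nodup)
    (he1 : {u0, u1, u2} ∈ H.edges) (he2 : {u2, u3, u4} ∈ H.edges) (ht : t ∈ H.edges)
    (htdisj : Disjoint t {u0, u1, u2, u3, u4})
    (hW1 : #(W1set H {u0, u1, u2, u3, u4}) = 3) :
    BowtieConfig H.edges t (H.verts \ ({u0, u1, u2, u3, u4} ∪ t)) {u0, u1} {u3, u4} u2 where
  card_edge e he := (hval e he).1
  pathFree := hval.loosePathFree hP
  triangleFree := hval.looseTriangleFree hC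
  card_left := card_pair (by grind)
  card_right := card_pair (by grind)
  left_mem := by
    rwa [show insert u2 {u0, u1} = ({u0, u1, u2} : Finset ℕ) by grind]
  right_mem := he2
  apart_mem := ht
  edge_subset e he v hv := by grind [(hval e he).2 hv]
  center_notMem := by grind [disjoint_right.1 htdisj]
  left_disjoint := disjoint_left.2 (by grind [disjoint_right.1 htdisj])
  right_disjoint := disjoint_left.2 (by grind [disjoint_right.1 htdisj])
  apart_disjoint := disjoint_sdiff.mono_left subset_union_right
  eq_apart e he heU := by
    rw [show insert u2 ({u0, u1} ∪ {u3, u4}) = ({u0, u1, u2, u3, u4} : Finset ℕ) by grind] at heU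
    rw [hval.eq_W1set_of_disjoint hW1 he heU, ← hval.eq_W1set_of_disjoint hW1 ht htdisj]

end ThreeGraph

lemma card_five_of_nodup {α : Type*} [DecidableEq α] {a b c d e : α}
    (h : [a, b, c, d, e].Nodup) : #({a, b, c, d, e} : Finset α) = 5 := by
  simpa using List.toFinset_card_of_nodup h

end

theorem fact_W1_three_general (H : ThreeGraph)
    (u0 u1 u2 u3 u4 : ℕ) (t : Finset ℕ) (hval : H.IsValid)
    (hP : H.Free pathP) (hC : H.Free triangleC)
    (hdist : List.Pairwise (· ≠ ·) [u0, u1, u2, u3, u4])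
    (he1 : ({u0, u1, u2} : Finset ℕ) ∈ H.edges)
    (he2 : ({u2, u3, u4} : Finset ℕ) ∈ H.edges)
    (ht : t ∈ H.edges) (htdisj : Disjoint t ({u0, u1, u2, u3, u4} : Finset ℕ))
    (hH1 : (H1set H {u0, u1, u2, u3, u4}).Nonempty)
    (hCo : ¬ (comet H.verts.card).ContainsCopy H)
    (hW1 : (W1set H {u0, u1, u2, u3, u4}).card = 3) :
    H.edges.card < 10 + (H.verts.card - 6).choose 2 := by
  have hconf := hval.bowtieConfig hP hC hdist he1 he2 ht htdisj hW1
  have hnear := ThreeGraph.exists_mem_nearEdges_of_H1set_nonempty hH1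
  rw [← hval.eq_W1set_of_disjoint hW1 ht htdisj] at hnear
  obtain ⟨ht3, htV⟩ := hval t ht
  have hUV : {u0, u1, u2, u3, u4} ⊆ H.verts := by grind [(hval _ he1).2, (hval _ he2).2]
  have hcard : (H.verts \ ({u0, u1, u2, u3, u4} ∪ t)).card + 2 = H.verts.card - 6 := by
    have := Finset.card_sdiff_add_card_eq_card (Finset.union_subset hUV htV)
    rw [Finset.card_union_of_disjoint htdisj.symm, card_five_of_nodup hdist, ht3] at this
    omega
  rw [← hcard]
  exact hconf.card_edges_lt hnear fun h => hCo <| hval.comet_containsCopy htV ht3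
    (hUV (by simp)) (Finset.disjoint_right.1 htdisj (by simp)) h

/-- Fact 3: in the Setup with `n ≥ 13`, if `H₁ ≠ ∅`, `H` is not contained in the
comet `Co(n)`, and `|W₁| = 3`, then `|H| < 10 + binom(n-6,2)`. -/
theorem fact_W1_three (n : ℕ) (hn : 13 ≤ n) (H : ThreeGraph)
    (u0 u1 u2 u3 u4 : ℕ) (t : Finset ℕ)
    (hval : H.IsValid) (hcard : H.verts.card = n) (hconn : H.Connected)
    (hP : H.Free pathP) (hC : H.Free triangleC)
    (hdist : List.Pairwise (· ≠ ·) [u0, u1, u2, u3, u4])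
    (he1 : ({u0, u1, u2} : Finset ℕ) ∈ H.edges)
    (he2 : ({u2, u3, u4} : Finset ℕ) ∈ H.edges)
    (ht : t ∈ H.edges) (htdisj : Disjoint t ({u0, u1, u2, u3, u4} : Finset ℕ))
    (hH1 : (H1set H {u0, u1, u2, u3, u4}).Nonempty)
    (hCo : ¬ (comet n).ContainsCopy H)
    (hW1 : (W1set H {u0, u1, u2, u3, u4}).card = 3) :
    H.edges.card < 10 + (n - 6).choose 2 := by
  subst hcard
  exact fact_W1_three_general H u0 u1 u2 u3 u4 t hval hP hC hdist he1 he2 ht htdisj hH1 hCo hW1
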